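/- arXiv:1709.04047 — 3 statements merged into one kernel-verified Lean document; each statement's English description precedes it below -/
import Mathlib

section
/- Let (Ω, F, P) be a probability space, δ a real number with 0 ≤ δ < 1, j ≥ 1 a natural number, and T ≥ 1 a natural number. Let (x_t)_{t≥1} and (w_t)_{t≥1} be random vectors in ℝ^n such that x_1 = 0 almost surely, ‖x_{t+1}‖ ≤ δ‖x_t‖ + ‖w_t‖ almost surely for every t ≥ 1, the random variables w_1, …, w_T are identically distributed, and exp(‖w_1‖^j) is integrable. Then E[(max_{1≤t≤T} ‖x_t‖)^j] ≤ (1−δ)^{−j} · log(T · E[exp(‖w_1‖^j)]). -/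
open MeasureTheory

theorem stmt_6 {Ω : Type*} [MeasurableSpace Ω] (P : Measure Ω) [IsProbabilityMeasure P]
    (δ : ℝ) (hδ0 : 0 ≤ δ) (hδ1 : δ < 1) (j : ℕ) (hj : 1 ≤ j) (T : ℕ) (hT : 1 ≤ T)
    (n : ℕ) (x w : ℕ → Ω → EuclideanSpace ℝ (Fin n))
    (hxmeas : ∀ t, Measurable (x t)) (hwmeas : ∀ t, Measurable (w t))
    (hx1 : ∀ᵐ ω ∂P, x 1 ω = 0)
    (hrec : ∀ t, 1 ≤ t → ∀ᵐ ω ∂P, ‖x (t + 1) ω‖ ≤ δ * ‖x t ω‖ + ‖w t ω‖)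
    (hid : ∀ t ∈ Finset.Icc 1 T, P.map (w t) = P.map (w 1))
    (hint : Integrable (fun ω => Real.exp (‖w 1 ω‖ ^ j)) P) :
    ∫ ω, ((Finset.Icc 1 T).sup' (Finset.nonempty_Icc.mpr hT) (fun t => ‖x t ω‖)) ^ j ∂P
      ≤ (1 - δ)⁻¹ ^ j * Real.log (T * ∫ ω, Real.exp (‖w 1 ω‖ ^ j) ∂P) := by
  have h1δ : 0 < 1 - δ := by linarith
  have hne : (Finset.Icc 1 T).Nonempty := Finset.nonempty_Icc.mpr hT
  set E : ℝ := ∫ ω, Real.exp (‖w 1 ω‖ ^ j) ∂P with hE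
  have hid' : ∀ t ∈ Finset.Icc 1 T, ProbabilityTheory.IdentDistrib
      (fun ω => Real.exp (‖w t ω‖ ^ j)) (fun ω => Real.exp (‖w 1 ω‖ ^ j)) P P := by
    intro t ht
    have h : ProbabilityTheory.IdentDistrib (w t) (w 1) P P :=
      ⟨(hwmeas t).aemeasurable, (hwmeas 1).aemeasurable, hid t ht⟩
    have hm : Measurable (fun v : EuclideanSpace ℝ (Fin n) => Real.exp (‖v‖ ^ j)) := by
      fun_prop
    exact h.comp hm
  have hintt : ∀ t ∈ Finset.Icc 1 T, Integrable (fun ω => Real.exp (‖w t ω‖ ^ j)) P :=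
    fun t ht => (hid' t ht).integrable_iff.mpr hint
  have hEt : ∀ t ∈ Finset.Icc 1 T, ∫ ω, Real.exp (‖w t ω‖ ^ j) ∂P = E :=
    fun t ht => (hid' t ht).integral_eq
  have hE1 : 1 ≤ E := by
    have h : ∫ _ω, (1 : ℝ) ∂P ≤ E := by
      apply integral_mono (integrable_const _) hint
      intro ω
      exact Real.one_le_exp (by positivity)
    simpa using h
  have hTpos : (0 : ℝ) < T := by exact_mod_cast hT
  have hm : 0 < (T : ℝ) * E := by positivity
  set m : ℝ := T * E with hmdef
  have hSint : Integrable (fun ω => ∑ t ∈ Finset.Icc 1 T, Real.exp (‖w t ω‖ ^ j)) P :=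
    integrable_finsetSum _ hintt
  have hSval : ∫ ω, ∑ t ∈ Finset.Icc 1 T, Real.exp (‖w t ω‖ ^ j) ∂P = m := by
    rw [integral_finsetSum _ hintt, Finset.sum_congr rfl hEt]
    simp [hmdef]
  have hrec' : ∀ᵐ ω ∂P, ∀ t, 1 ≤ t → ‖x (t + 1) ω‖ ≤ δ * ‖x t ω‖ + ‖w t ω‖ := by
    rw [ae_all_iff]
    intro t
    by_cases ht : 1 ≤ t
    · filter_upwards [hrec t ht] with ω hω _ using hω
    · exact Filter.Eventually.of_forall fun ω h => absurd h ht
  have key : ∀ᵐ ω ∂P,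
      ((Finset.Icc 1 T).sup' hne (fun t => ‖x t ω‖)) ^ j ≤ (1 - δ)⁻¹ ^ j *
        ((Real.log m - 1) + (∑ t ∈ Finset.Icc 1 T, Real.exp (‖w t ω‖ ^ j)) * m⁻¹) := by
    filter_upwards [hx1, hrec'] with ω h1 hr
    obtain ⟨s, hs, hsW⟩ := Finset.exists_mem_eq_sup' hne (fun t => ‖w t ω‖)
    have hW : ∀ t ∈ Finset.Icc 1 T, ‖w t ω‖ ≤ ‖w s ω‖ := by
      intro t ht
      have := Finset.le_sup' (fun t => ‖w t ω‖) ht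
      rwa [hsW] at this
    have hb : ∀ t, 1 ≤ t → t ≤ T → ‖x t ω‖ ≤ (1 - δ)⁻¹ * ‖w s ω‖ := by
      intro t ht
      induction t, ht using Nat.le_induction with
      | base =>
        intro _
        rw [h1, norm_zero]
        positivity
      | succ t ht ih =>
        intro htT
        have a := ih (by omega)
        have b := hr t ht
        have c := hW t (Finset.mem_Icc.mpr ⟨ht, by omega⟩)
        have d := mul_le_mul_of_nonneg_left a hδ0
        have e : δ * ((1 - δ)⁻¹ * ‖w s ω‖) + ‖w s ω‖ = (1 - δ)⁻¹ * ‖w s ω‖ := by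
          field_simp
          ring
        linarith
    have hX : (Finset.Icc 1 T).sup' hne (fun t => ‖x t ω‖) ≤ (1 - δ)⁻¹ * ‖w s ω‖ :=
      Finset.sup'_le _ _ fun t ht => hb t (Finset.mem_Icc.mp ht).1 (Finset.mem_Icc.mp ht).2
    have hX0 : 0 ≤ (Finset.Icc 1 T).sup' hne (fun t => ‖x t ω‖) :=
      (norm_nonneg _).trans (Finset.le_sup' (fun t => ‖x t ω‖) hs)
    refine (pow_le_pow_left₀ hX0 hX j).trans ?_
    rw [mul_pow]
    apply mul_le_mul_of_nonneg_left _ (by positivity)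
    have hS : Real.exp (‖w s ω‖ ^ j) ≤ ∑ t ∈ Finset.Icc 1 T, Real.exp (‖w t ω‖ ^ j) :=
      Finset.single_le_sum (f := fun t => Real.exp (‖w t ω‖ ^ j))
        (fun t _ => (Real.exp_pos _).le) hs
    have hSm := mul_le_mul_of_nonneg_right hS (inv_pos.mpr hm).le
    have hl := Real.log_le_sub_one_of_pos (mul_pos (Real.exp_pos (‖w s ω‖ ^ j)) (inv_pos.mpr hm))
    rw [Real.log_mul (Real.exp_pos _).ne' (inv_pos.mpr hm).ne', Real.log_exp, Real.log_inv] at hl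
    linarith
  have hgint : Integrable (fun ω => (1 - δ)⁻¹ ^ j *
        ((Real.log m - 1) + (∑ t ∈ Finset.Icc 1 T, Real.exp (‖w t ω‖ ^ j)) * m⁻¹)) P :=
    ((integrable_const _).add (hSint.mul_const _)).const_mul _
  refine (integral_mono_of_nonneg (Filter.Eventually.of_forall fun ω => ?_) hgint key).trans ?_
  · have : 0 ≤ (Finset.Icc 1 T).sup' hne (fun t => ‖x t ω‖) :=
      (norm_nonneg _).trans
        (Finset.le_sup' (fun t => ‖x t ω‖) (Finset.mem_Icc.mpr ⟨le_rfl, hT⟩))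
    exact pow_nonneg this j
  · rw [integral_const_mul, integral_add (integrable_const _) (hSint.mul_const _),
      integral_mul_const, hSval, mul_inv_cancel₀ hm.ne']
    simp
end

section
/- Let K ≥ 1 and M ≥ 1 be natural numbers, let T_0 = 1 and let T_1, …, T_K be positive integers with Σ_{k=1}^K T_k = T. Suppose there are indices 1 = n_1 < n_2 < … < n_M ≤ K (with the convention n_{M+1} = K + 1) partitioning {1, …, K} into M consecutive blocks {n_i, …, n_{i+1} − 1}, such that T_k = T_{k−1} + 1 for every k that is not the last index of its block (i.e., for every k with n_i ≤ k ≤ n_{i+1} − 2 for some i). Then K ≤ √(2·M·T). -/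
theorem block_aux (T : ℕ → ℕ) (a b : ℕ) (ha : 1 ≤ a) (hab : a < b) (h0 : 1 ≤ T (a - 1))
    (hlast : 1 ≤ T (b - 1))
    (hstep : ∀ k, a ≤ k → k + 2 ≤ b → T k = T (k - 1) + 1) :
    ((b : ℤ) - a) ^ 2 ≤ 2 * ∑ k ∈ Finset.Ico a b, (T k : ℤ) := by
  have h1 : ∀ j, a + j + 2 ≤ b → j + 2 ≤ T (a + j) := by
    intro j
    induction j with
    | zero =>
      intro h
      have := hstep a le_rfl (by omega)
      simp only [add_zero]
      omega
    | succ j ih =>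
      intro h
      have h2 := hstep (a + (j + 1)) (by omega) (by omega)
      have h3 : a + (j + 1) - 1 = a + j := by omega
      rw [h3] at h2
      have := ih (by omega)
      omega
  have h2 : ∀ m : ℕ, a + m + 1 ≤ b →
      (m : ℤ) * (m + 3) ≤ 2 * ∑ k ∈ Finset.Ico a (a + m), (T k : ℤ) := by
    intro m
    induction m with
    | zero => simp
    | succ m ih =>
      intro h
      have e := ih (by omega)
      have f : ((m + 2 : ℕ) : ℤ) ≤ T (a + m) := by exact_mod_cast h1 m (by omega)
      rw [← add_assoc, Finset.sum_Ico_succ_top (by omega)]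
      push_cast at f ⊢
      nlinarith
  obtain ⟨m, rfl⟩ : ∃ m, b = a + m + 1 := ⟨b - a - 1, by omega⟩
  have e := h2 m le_rfl
  rw [Finset.sum_Ico_succ_top (by omega)]
  have f : (1 : ℤ) ≤ T (a + m) := by exact_mod_cast hlast
  push_cast
  nlinarith

theorem stmt_9 (K M : ℕ) (hK : 1 ≤ K) (hM : 1 ≤ M)
    (T : ℕ → ℕ) (hT0 : T 0 = 1) (hTpos : ∀ k, 1 ≤ k → k ≤ K → 1 ≤ T k)
    (Ttot : ℕ) (hsum : ∑ k ∈ Finset.Icc 1 K, T k = Ttot)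
    (n : ℕ → ℕ) (hn1 : n 1 = 1) (hmono : ∀ i, 1 ≤ i → i ≤ M → n i < n (i + 1))
    (hnM : n M ≤ K) (hnM1 : n (M + 1) = K + 1)
    (hstep : ∀ i, 1 ≤ i → i ≤ M → ∀ k, n i ≤ k → k + 2 ≤ n (i + 1) → T k = T (k - 1) + 1) :
    (K : ℝ) ≤ Real.sqrt (2 * M * Ttot) := by
  have hpos : ∀ k, k ≤ K → 1 ≤ T k := by
    intro k hk
    rcases Nat.eq_zero_or_pos k with rfl | h
    · omega
    · exact hTpos k h hk
  have hge : ∀ m, m ≤ M → 1 ≤ n (m + 1) := by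
    intro m hm
    rcases Nat.eq_zero_or_pos m with rfl | h
    · simp [hn1]
    · have := hmono m h hm
      omega
  have hle : ∀ d, d ≤ M → n (M - d + 1) ≤ K + 1 := by
    intro d
    induction d with
    | zero => intro _; simp [hnM1]
    | succ d ih =>
      intro hd
      have h1 := ih (by omega)
      have h2 := hmono (M - (d + 1) + 1) (by omega) (by omega)
      have h3 : M - (d + 1) + 1 + 1 = M - d + 1 := by omega
      rw [h3] at h2
      omega
  have hle' : ∀ m, m ≤ M → n (m + 1) ≤ K + 1 := by
    intro m hm
    have := hle (M - m) (by omega)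
    rwa [Nat.sub_sub_self hm] at this
  have key : ∀ m, m ≤ M →
      ∑ i ∈ Finset.range m, ((n (i + 1 + 1) : ℤ) - n (i + 1)) ^ 2
        ≤ 2 * ∑ k ∈ Finset.Ico 1 (n (m + 1)), (T k : ℤ) := by
    intro m
    induction m with
    | zero => simp [hn1]
    | succ m ih =>
      intro hm
      have e := ih (by omega)
      have hlt := hmono (m + 1) (by omega) hm
      have g1 := hge m (by omega)
      have g2 := hle' (m + 1) hm
      have b := block_aux T (n (m + 1)) (n (m + 1 + 1)) g1 hlt (hpos _ (by omega))
        (hpos _ (by omega)) (hstep (m + 1) (by omega) hm)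
      rw [Finset.sum_range_succ, ← Finset.sum_Ico_consecutive _ g1 hlt.le]
      linarith
  have k1 := key M le_rfl
  have cs := sq_sum_le_card_mul_sum_sq (s := Finset.range M)
    (f := fun i => ((n (i + 1 + 1) : ℤ) - n (i + 1)))
  rw [Finset.sum_range_sub (fun i => (n (i + 1) : ℤ)), Finset.card_range] at cs
  have hI : Finset.Ico 1 (K + 1) = Finset.Icc 1 K := by ext; simp [Nat.lt_succ_iff]
  have hs : ∑ k ∈ Finset.Icc 1 K, (T k : ℤ) = Ttot := by exact_mod_cast hsum
  rw [hnM1, hI, hs] at k1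
  simp only [hnM1, zero_add, hn1] at cs
  have fin : (K : ℤ) ^ 2 ≤ 2 * M * Ttot := by
    have := mul_le_mul_of_nonneg_left k1 (Int.natCast_nonneg M)
    push_cast at cs
    have h : ((K : ℤ) + 1 - 1) = K := by ring
    rw [h] at cs
    linarith
  apply Real.le_sqrt_of_sq_le
  exact_mod_cast fin
end

section
/- Let Ω, 𝒵, Θ, 𝒳 be standard Borel spaces, with (Ω, F, P) a probability space. Let Z : Ω → 𝒵 and θ, θ̃ : Ω → Θ be measurable, and suppose the conditional distributions of θ given Z and of θ̃ given Z coincide, i.e., the Markov kernels condDistrib(θ | Z) and condDistrib(θ̃ | Z) agree for (P ∘ Z⁻¹)-almost every z ∈ 𝒵. Let g : 𝒵 → 𝒳 be measurable, set X = g ∘ Z, and let f : Θ × 𝒳 → ℝ be bounded and measurable. Then E[f(θ̃, X)] = E[f(θ, X)]. -/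
open MeasureTheory ProbabilityTheory

theorem stmt_12 {Ω 𝒵 Θ 𝒳 : Type*}
    [MeasurableSpace Ω] [StandardBorelSpace Ω]
    [MeasurableSpace 𝒵] [StandardBorelSpace 𝒵] [Nonempty 𝒵]
    [MeasurableSpace Θ] [StandardBorelSpace Θ] [Nonempty Θ]
    [MeasurableSpace 𝒳] [StandardBorelSpace 𝒳] [Nonempty 𝒳]
    (P : Measure Ω) [IsProbabilityMeasure P]
    (Z : Ω → 𝒵) (θ θt : Ω → Θ)
    (hZ : Measurable Z) (hθ : Measurable θ) (hθt : Measurable θt)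
    (hcond : ∀ᵐ z ∂(P.map Z), condDistrib θ Z P z = condDistrib θt Z P z)
    (g : 𝒵 → 𝒳) (hg : Measurable g)
    (f : Θ × 𝒳 → ℝ) (hf : Measurable f) (C : ℝ) (hC : ∀ p, |f p| ≤ C) :
    ∫ ω, f (θt ω, g (Z ω)) ∂P = ∫ ω, f (θ ω, g (Z ω)) ∂P := by
  have hmap : P.map (fun ω => (Z ω, θt ω)) = P.map (fun ω => (Z ω, θ ω)) := by
    rw [← compProd_map_condDistrib hθt.aemeasurable, ← compProd_map_condDistrib hθ.aemeasurable]
    exact (Measure.compProd_congr hcond).symm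
  have hF : Measurable (fun p : 𝒵 × Θ => f (p.2, g p.1)) := by fun_prop
  have h1 := integral_map (μ := P) (hZ.prodMk hθt).aemeasurable hF.aestronglyMeasurable
  have h2 := integral_map (μ := P) (hZ.prodMk hθ).aemeasurable hF.aestronglyMeasurable
  rw [hmap] at h1
  exact h1.symm.trans h2
end
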